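/- Suppose |a_1⁻¹⋯a_n⁻¹ b_1⁻¹⋯b_n⁻¹| < |s| < 1 and that y_i a_j ∉ qᶻ for all 1 ≤ i, j ≤ n. Then Ī(s;y) = [(1 − s a_1⋯a_n b_1⋯b_n) / (b_1⋯b_n (1 − s))] · (y_1⋯y_n) · Ī(qs;y). (Recurrence for the dual Milne–Gustafson sum, Lemma 3.7 of the paper, written multiplicatively with s = q^β.) -/

import Mathlib

/-!
Write `z = y q^ν` and `w(z) = ∏_j (q z / b_j)_∞ / (a_j z)_∞`, and let
`J_k(y) = ∑_ν s^ν w(z) z^k` be the one-variable moments. Since `∏_{i<j} (z_i - z_j)` is the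
determinant of `(z_i^{n-1-k})`, the multiple sum `Ī(s;y)` is `(1 - q)ⁿ` times the determinant with
columns `J_{n-1}, …, J_0`. Replacing `s` by `q s` turns `y J_k` into `J_{k+1}`, so
`y_1⋯y_n Ī(qs;y)` is `(1 - q)ⁿ` times the determinant with columns `J_n, …, J_1`.

Both are maximal minors of the matrix with columns `J_n, …, J_0`. The `q`-difference equation
`w(qz) ∏_j (1 - q z / b_j) = w(z) ∏_j (1 - a_j z)` and the invariance of bilateral sums under
`ν ↦ ν + 1` put the coefficients of `s ∏_j (1 - a_j X) - ∏_j (1 - X / b_j)` in the kernel of that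
matrix, and its maximal minors are proportional, up to sign, to any kernel vector. The two minors
are therefore related by the coefficients of `X^n` and `X^0`.

The bounds on `|s|` give absolute convergence of `J_0, …, J_n`: by the `q`-difference equation the
ratio of consecutive terms of `J_k` tends to `s q^k` as `ν → ∞`, and, read backwards, to
`q^{n-k} / (s a_1⋯a_n b_1⋯b_n)` as `ν → -∞`.
-/

open scoped BigOperators
open Finset

/-- The infinite q-Pochhammer symbol `(a)_∞ = ∏_{i=0}^∞ (1 - qⁱ a)`. -/
noncomputable def qp (q a : ℂ) : ℂ := ∏' i : ℕ, (1 - q ^ i * a)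

/-- Summand of the normalized dual Jackson integral of Milne–Gustafson type. -/
noncomputable def mgDualTerm {n : ℕ} (q s : ℂ) (a b y : Fin n → ℂ) (ν : Fin n → ℤ) : ℂ :=
  s ^ (∑ i, ν i) *
    (∏ i, ∏ j, qp q (q * (b j)⁻¹ * (y i * q ^ ν i)) / qp q (a j * (y i * q ^ ν i))) *
    ∏ i, ∏ j ∈ Finset.Ioi i, (y i * q ^ ν i - y j * q ^ ν j)

/-- The normalized dual Jackson integral of Milne–Gustafson type `Ī(s;y)`. -/
noncomputable def mgDualSum {n : ℕ} (q s : ℂ) (a b y : Fin n → ℂ) : ℂ :=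
  (1 - q) ^ n * ∑' ν : Fin n → ℤ, mgDualTerm q s a b y ν

open Filter Topology Bornology Matrix Polynomial

/-! ### Bilateral series and products of series -/

lemma zpow_sum₀ {ι G : Type*} [CommGroupWithZero G] {s : G} (hs : s ≠ 0) (t : Finset ι)
    (f : ι → ℤ) : s ^ (∑ i ∈ t, f i) = ∏ i ∈ t, s ^ f i := by
  induction t using Finset.cons_induction with
  | empty => simp
  | cons i t hi ih => rw [sum_cons, prod_cons, zpow_add₀ hs, ih]

lemma mul_zpow_add_one {G : Type*} [CommGroupWithZero G] {q : G} (hq : q ≠ 0) (y : G) (ν : ℤ) :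
    y * q ^ (ν + 1) = q * (y * q ^ ν) := by
  rw [zpow_add_one₀ hq, ← mul_assoc, mul_comm]

lemma summable_norm_and_hasSum_pi_fin_prod {m : ℕ} {β R : Type*} [NormedCommRing R]
    [CompleteSpace R] {f : Fin m → β → R} (hf : ∀ i, Summable fun x => ‖f i x‖) :
    (Summable fun ν : Fin m → β => ‖∏ i, f i (ν i)‖) ∧
      HasSum (fun ν : Fin m → β => ∏ i, f i (ν i)) (∏ i, ∑' x, f i x) := by
  induction m with
  | zero => exact ⟨.of_finite, by simp⟩
  | succ m ih =>
    obtain ⟨hnorm, hsum⟩ := ih fun i => hf i.succ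
    have hnorm' := (hf 0).mul_norm hnorm
    have hsum' := (hf 0).of_norm.hasSum.mul hsum hnorm'.of_norm
    rw [← (Fin.consEquiv fun _ : Fin (m + 1) => β).summable_iff,
      ← (Fin.consEquiv fun _ : Fin (m + 1) => β).hasSum_iff, Fin.prod_univ_succ]
    simpa [Function.comp_def, Fin.consEquiv, Fin.prod_univ_succ] using And.intro hnorm' hsum'

lemma hasSum_pi_prod_of_summable_norm {ι β R : Type*} [Fintype ι] [NormedCommRing R]
    [CompleteSpace R] {f : ι → β → R} (hf : ∀ i, Summable fun x => ‖f i x‖) :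
    HasSum (fun ν : ι → β => ∏ i, f i (ν i)) (∏ i, ∑' x, f i x) := by
  let e := Fintype.equivFin ι
  rw [← (e.arrowCongr (Equiv.refl β)).symm.hasSum_iff, ← e.symm.prod_comp]
  convert! (summable_norm_and_hasSum_pi_fin_prod fun i => hf (e.symm i)).2 using 2 with ν
  rw [Function.comp_apply, ← e.symm.prod_comp]
  simp

lemma hasSum_det_of_summable_norm {n β R : Type*} [Fintype n] [DecidableEq n] [NormedCommRing R]
    [CompleteSpace R] {f : n → n → β → R} (hf : ∀ i k, Summable fun x => ‖f i k x‖) :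
    HasSum (fun ν : n → β => (of fun i k => f i k (ν i)).det)
      (of fun i k => ∑' x, f i k x).det := by
  simp only [← det_transpose (of _), det_apply', transpose_apply, of_apply]
  exact hasSum_sum fun σ _ =>
    (hasSum_pi_prod_of_summable_norm fun i => hf i (σ i)).mul_left _

lemma summable_of_tendsto_ratio {𝕜 : Type*} [NormedField 𝕜] [CompleteSpace 𝕜] {f r : ℕ → 𝕜}
    {L : 𝕜} (hL : ‖L‖ < 1) (hr : Tendsto r atTop (𝓝 L))
    (hf : ∀ᶠ m in atTop, f (m + 1) = r m * f m) : Summable f := by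
  obtain ⟨ρ, hLρ, hρ⟩ := exists_between hL
  refine summable_of_ratio_norm_eventually_le hρ ?_
  filter_upwards [hf, hr.norm.eventually_le_const hLρ] with m hm hrm
  rw [hm, norm_mul]
  gcongr

lemma summable_int_of_tendsto_ratio {𝕜 : Type*} [NormedField 𝕜] [CompleteSpace 𝕜]
    {f r r' : ℤ → 𝕜} {L L' : 𝕜} (hL : ‖L‖ < 1) (hL' : ‖L'‖ < 1)
    (hr : Tendsto r atTop (𝓝 L)) (hr' : Tendsto r' atBot (𝓝 L'))
    (hf : ∀ᶠ ν in atTop, f (ν + 1) = r ν * f ν)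
    (hf' : ∀ᶠ ν in atBot, f ν = r' ν * f (ν + 1)) : Summable f := by
  have hneg : Tendsto (fun m : ℕ => -((m + 1 : ℕ) : ℤ)) atTop atBot :=
    tendsto_neg_atTop_atBot.comp (tendsto_natCast_atTop_atTop.comp (tendsto_add_atTop_nat 1))
  refine .of_nat_of_neg (summable_of_tendsto_ratio hL (hr.comp tendsto_natCast_atTop_atTop) ?_)
    (summable_of_tendsto_ratio hL' (hr'.comp hneg) ?_)
  · filter_upwards [tendsto_natCast_atTop_atTop.eventually hf] with m hm
    simpa using hm
  · filter_upwards [hneg.eventually hf'] with m hm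
    simpa using hm

/-! ### Maximal minors and kernel vectors -/

lemma mul_det_submatrix_succAbove_of_mulVec_eq_zero {R : Type*} [CommRing R] {n : ℕ}
    {A : Matrix (Fin n) (Fin (n + 1)) R} {c : Fin (n + 1) → R} (hc : A *ᵥ c = 0)
    (j k : Fin (n + 1)) :
    c j * ((-1) ^ (k : ℕ) * (A.submatrix id k.succAbove).det) =
      c k * ((-1) ^ (j : ℕ) * (A.submatrix id j.succAbove).det) := by
  -- Prepend the `k`-th unit vector to `A` and multiply by the adjugate.
  let B : Matrix (Fin (n + 1)) (Fin (n + 1)) R := of (vecCons (Pi.single k 1) A)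
  have hminor (l : Fin (n + 1)) : B.submatrix Fin.succ l.succAbove = A.submatrix id l.succAbove :=
    rfl
  have hdet : B.det = (-1) ^ (k : ℕ) * (A.submatrix id k.succAbove).det := by
    rw [det_succ_row_zero, Finset.sum_eq_single k]
    · simp [B, hminor]
    · intro l _ hl
      simp [B, hl]
    · simp
  have hBc : B *ᵥ c = Pi.single 0 (c k) := by
    ext i
    refine Fin.cases ?_ (fun i => ?_) i
    · simp [B, mulVec]
    · exact congrFun hc i
  have hadj := congrFun (congrArg (B.adjugate *ᵥ ·) hBc) j
  simp only [mulVec_mulVec, adjugate_mul, smul_mulVec, one_mulVec, mulVec_single, hdet] at hadj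
  simpa [adjugate_fin_succ_eq_det_submatrix, hminor, mul_comm] using hadj

lemma coeff_zero_mul_det_eq_coeff_mul_det {R : Type*} [CommRing R] {n : ℕ}
    {J : Fin n → ℕ → R} {c : ℕ → R} (hc : ∀ i, ∑ k ∈ range (n + 1), c k * J i k = 0) :
    c 0 * (of fun i k : Fin n => J i k.rev).det =
      (-1) ^ n * c n * (of fun i k : Fin n => J i (k.rev + 1)).det := by
  let A : Matrix (Fin n) (Fin (n + 1)) R := of fun i k => J i k.rev
  have hker : A *ᵥ (fun k => c k.rev) = 0 := by
    ext i
    rw [Pi.zero_apply, ← hc i, Finset.sum_range, ← Equiv.sum_comp Fin.revPerm]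
    simp only [A, mulVec, dotProduct, of_apply, Fin.revPerm_apply, mul_comm]
  have hfirst : A.submatrix id (Fin.succAbove 0) = of fun i k : Fin n => J i k.rev := by
    ext i k
    simp only [A, submatrix_apply, of_apply, id_eq, Fin.succAbove_zero, Fin.rev_succ,
      Fin.val_castSucc]
  have hlast : A.submatrix id (Fin.last n).succAbove = of fun i k : Fin n => J i (k.rev + 1) := by
    ext i k
    simp only [A, submatrix_apply, of_apply, id_eq, Fin.succAbove_last, Fin.rev_castSucc,
      Fin.val_succ]
  have hminors := mul_det_submatrix_succAbove_of_mulVec_eq_zero hker (Fin.last n) 0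
  rw [hfirst, hlast] at hminors
  simpa [mul_assoc, mul_left_comm] using hminors

/-! ### Moments of a weight on a `q`-lattice -/

section JacksonMoment

variable {𝕜 : Type*} [NormedField 𝕜] {q s y : 𝕜} {w : 𝕜 → 𝕜} {k : ℕ}

/-- The term `s^ν w(z) z^k`, `z = y q^ν`, of the series defining `jacksonMoment q s w y k`. -/
def jacksonMomentTerm (q s : 𝕜) (w : 𝕜 → 𝕜) (y : 𝕜) (k : ℕ) (ν : ℤ) : 𝕜 :=
  s ^ ν * w (y * q ^ ν) * (y * q ^ ν) ^ k

/-- The `k`-th moment `J_k(y) = ∑_ν s^ν w(z) z^k`, `z = y q^ν`, of the weight `w`: up to the factor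
`1 - q`, the bilateral Jackson integral of `z ↦ w(z) z^k` against the character `q^ν ↦ s^ν`. -/
noncomputable def jacksonMoment (q s : 𝕜) (w : 𝕜 → 𝕜) (y : 𝕜) (k : ℕ) : 𝕜 :=
  ∑' ν, jacksonMomentTerm q s w y k ν

lemma tendsto_mul_zpow_atTop (hq : ‖q‖ < 1) (y : 𝕜) :
    Tendsto (fun ν : ℤ => y * q ^ ν) atTop (𝓝 0) := by
  rw [← Nat.map_cast_int_atTop, tendsto_map'_iff]
  simpa [Function.comp_def] using (tendsto_pow_atTop_nhds_zero_of_norm_lt_one hq).const_mul y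

lemma tendsto_mul_zpow_atBot (hq0 : q ≠ 0) (hq : ‖q‖ < 1) (hy : y ≠ 0) :
    Tendsto (fun ν : ℤ => y * q ^ ν) atBot (cobounded 𝕜) := by
  have hinv : Tendsto (fun ν : ℤ => y⁻¹ * q ^ (-ν)) atBot (𝓝[≠] 0) :=
    tendsto_nhdsWithin_iff.2 ⟨(tendsto_mul_zpow_atTop hq y⁻¹).comp tendsto_neg_atBot_atTop,
      .of_forall fun ν => mul_ne_zero (inv_ne_zero hy) (zpow_ne_zero _ hq0)⟩
  simpa [Function.comp_def, mul_comm] using tendsto_inv₀_nhdsNE_zero.comp hinv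

lemma jacksonMomentTerm_add_one (hq0 : q ≠ 0) (hs : s ≠ 0) (ν : ℤ) :
    jacksonMomentTerm q s w y k (ν + 1) =
      s * q ^ k * (s ^ ν * w (q * (y * q ^ ν)) * (y * q ^ ν) ^ k) := by
  rw [jacksonMomentTerm, mul_zpow_add_one hq0, zpow_add_one₀ hs]
  ring

lemma summable_jacksonMomentTerm [CompleteSpace 𝕜] {R R' : 𝕜 → 𝕜} {L L' : 𝕜}
    (hq0 : q ≠ 0) (hq : ‖q‖ < 1) (hs : s ≠ 0) (hy : y ≠ 0)
    (hR : Tendsto R (𝓝 0) (𝓝 L)) (hw : ∀ᶠ z in 𝓝 0, w (q * z) = R z * w z)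
    (hR' : Tendsto R' (cobounded 𝕜) (𝓝 L')) (hw' : ∀ᶠ z in cobounded 𝕜, w z = R' z * w (q * z))
    (hL : ‖s * q ^ k * L‖ < 1) (hL' : ‖(s * q ^ k)⁻¹ * L'‖ < 1) :
    Summable (jacksonMomentTerm q s w y k) := by
  have hzero := tendsto_mul_zpow_atTop hq y
  have hinfty := tendsto_mul_zpow_atBot hq0 hq hy
  refine summable_int_of_tendsto_ratio hL hL' ((hR.comp hzero).const_mul _)
    ((hR'.comp hinfty).const_mul _) ?_ ?_
  · filter_upwards [hzero.eventually hw] with ν hν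
    rw [jacksonMomentTerm_add_one hq0 hs, hν, jacksonMomentTerm, Function.comp_apply]
    ring
  · filter_upwards [hinfty.eventually hw'] with ν hν
    rw [jacksonMomentTerm_add_one hq0 hs, jacksonMomentTerm, hν, Function.comp_apply]
    field_simp

lemma mul_jacksonMomentTerm (q s : 𝕜) (w : 𝕜 → 𝕜) (y : 𝕜) (k : ℕ) (ν : ℤ) :
    y * jacksonMomentTerm q (q * s) w y k ν = jacksonMomentTerm q s w y (k + 1) ν := by
  simp only [jacksonMomentTerm, mul_zpow]
  ring

lemma mul_jacksonMoment (q s : 𝕜) (w : 𝕜 → 𝕜) (y : 𝕜) (k : ℕ) :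
    y * jacksonMoment q (q * s) w y k = jacksonMoment q s w y (k + 1) := by
  simp only [jacksonMoment, ← mul_jacksonMomentTerm, tsum_mul_left]

lemma hasSum_mul_eval_jacksonMoment {N : ℕ} {p : 𝕜[X]} (hp : p.natDegree ≤ N)
    (hsum : ∀ k ≤ N, Summable (jacksonMomentTerm q s w y k)) :
    HasSum (fun ν : ℤ => s ^ ν * w (y * q ^ ν) * p.eval (y * q ^ ν))
      (∑ k ∈ range (N + 1), p.coeff k * jacksonMoment q s w y k) := by
  convert! hasSum_sum fun k hk =>
    (hsum k (mem_range_succ_iff.1 hk)).hasSum.mul_left (p.coeff k) using 2 with ν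
  rw [Polynomial.eval_eq_sum_range' (Nat.lt_succ_of_le hp), Finset.mul_sum]
  refine Finset.sum_congr rfl fun k _ => ?_
  rw [jacksonMomentTerm]
  ring

lemma sum_coeff_mul_jacksonMoment_eq_zero {N : ℕ} {P Q : 𝕜[X]} (hq0 : q ≠ 0) (hs : s ≠ 0)
    (hP : P.natDegree ≤ N) (hQ : Q.natDegree ≤ N)
    (hw : ∀ ν : ℤ, w (q * (y * q ^ ν)) * Q.eval (q * (y * q ^ ν)) =
      w (y * q ^ ν) * P.eval (y * q ^ ν))
    (hsum : ∀ k ≤ N, Summable (jacksonMomentTerm q s w y k)) :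
    ∑ k ∈ range (N + 1), (C s * P - Q).coeff k * jacksonMoment q s w y k = 0 := by
  have hQsum := hasSum_mul_eval_jacksonMoment hQ hsum
  have hshift := (Equiv.addRight (1 : ℤ)).hasSum_iff.2 hQsum
  have hPsum := (hasSum_mul_eval_jacksonMoment hP hsum).mul_left s
  have hPQ : s * ∑ k ∈ range (N + 1), P.coeff k * jacksonMoment q s w y k =
      ∑ k ∈ range (N + 1), Q.coeff k * jacksonMoment q s w y k := by
    refine hPsum.unique ?_
    convert! hshift using 2 with ν
    rw [Function.comp_apply, Equiv.coe_addRight, mul_zpow_add_one hq0, zpow_add_one₀ hs]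
    linear_combination -(s ^ ν * s) * hw ν
  simp only [coeff_sub, coeff_C_mul, sub_mul, mul_assoc, sum_sub_distrib, ← Finset.mul_sum, hPQ,
    sub_self]

end JacksonMoment

/-! ### Products of linear polynomials -/

section ProdOneSub

variable {ι R : Type*} [Fintype ι] [CommRing R]

/-- The polynomial `∏_j (1 - c_j X)`, parametrized by the inverses of its roots. -/
noncomputable def prodOneSub (c : ι → R) : R[X] := ∏ j, (1 - C (c j) * X)

lemma natDegree_one_sub_C_mul_X_le (c : R) : (1 - C c * X : R[X]).natDegree ≤ 1 := by
  compute_degree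

lemma natDegree_prodOneSub_le (c : ι → R) : (prodOneSub c).natDegree ≤ Fintype.card ι := by
  simpa [prodOneSub] using (natDegree_prod_le univ _).trans
    (Finset.sum_le_card_nsmul _ _ 1 fun j _ => natDegree_one_sub_C_mul_X_le (c j))

lemma eval_prodOneSub (c : ι → R) (z : R) : (prodOneSub c).eval z = ∏ j, (1 - c j * z) := by
  simp [prodOneSub, eval_prod]

lemma coeff_zero_prodOneSub (c : ι → R) : (prodOneSub c).coeff 0 = 1 := by
  simp [coeff_zero_eq_eval_zero, eval_prodOneSub]

lemma coeff_card_prodOneSub (c : ι → R) :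
    (prodOneSub c).coeff (Fintype.card ι) = (-1) ^ Fintype.card ι * ∏ j, c j := by
  have h := coeff_prod_of_natDegree_le (s := univ) (fun j => 1 - C (c j) * X) 1
    fun j _ => natDegree_one_sub_C_mul_X_le (c j)
  rw [mul_one, card_univ] at h
  simp [prodOneSub, h, coeff_one, Finset.prod_neg]

end ProdOneSub

/-! ### The weight of the Milne–Gustafson sum -/

lemma tendsto_one_sub_div_one_sub_cobounded {𝕜 : Type*} [NormedField 𝕜] {c : 𝕜} (hc : c ≠ 0)
    (d : 𝕜) : Tendsto (fun z => (1 - d * z) / (1 - c * z)) (cobounded 𝕜) (𝓝 (d / c)) := by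
  have hinv (e : 𝕜) : Tendsto (fun z : 𝕜 => z⁻¹ - e) (cobounded 𝕜) (𝓝 (-e)) := by
    simpa using (tendsto_inv₀_cobounded (α := 𝕜)).sub_const e
  rw [← neg_div_neg_eq d c]
  refine ((hinv d).div (hinv c) (neg_ne_zero.2 hc)).congr' ?_
  filter_upwards [eventually_ne_cobounded (0 : 𝕜)] with z hz
  rw [Pi.div_apply, ← mul_div_mul_right _ _ hz, sub_mul, sub_mul, inv_mul_cancel₀ hz]

section Weight

variable {ι : Type*} [Fintype ι] {q s y : ℂ} {a : ι → ℂ}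

lemma qp_eq_one_sub_mul (hq : ‖q‖ < 1) (x : ℂ) : qp q x = (1 - x) * qp q (q * x) := by
  have hx : Summable fun i : ℕ => ‖-(q ^ i * x)‖ := by
    simpa [norm_mul, norm_pow] using
      (summable_geometric_of_lt_one (norm_nonneg q) hq).mul_right ‖x‖
  have hmul : Multipliable fun i : ℕ => 1 - q ^ (i + 1) * x := by
    simpa [sub_eq_add_neg] using
      multipliable_one_add_of_summable
        ((summable_nat_add_iff (f := fun i : ℕ => ‖-(q ^ i * x)‖) 1).2 hx)
  simpa [qp, pow_succ, mul_assoc] using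
    tprod_eq_zero_mul' (f := fun i : ℕ => 1 - q ^ i * x) hmul

/-- The one-variable weight `∏_j (q z / b_j)_∞ / (a_j z)_∞` of the Milne–Gustafson sum. -/
noncomputable def mgWeight (q : ℂ) (a b : ι → ℂ) (z : ℂ) : ℂ :=
  ∏ j, qp q (q * (b j)⁻¹ * z) / qp q (a j * z)

-- At a pole, where some `1 - a j * z = 0`, both sides are zero because `x / 0 = 0`.
lemma mgWeight_eq_ratio_mul (hq : ‖q‖ < 1) (a b : ι → ℂ) (z : ℂ) :
    mgWeight q a b z =
      (∏ j, (1 - (b j)⁻¹ * q * z) / (1 - a j * z)) * mgWeight q a b (q * z) := by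
  rw [mgWeight, mgWeight, ← prod_mul_distrib]
  refine prod_congr rfl fun j _ => ?_
  rw [qp_eq_one_sub_mul hq (q * (b j)⁻¹ * z), qp_eq_one_sub_mul hq (a j * z), mul_div_mul_comm]
  ring_nf

lemma mgWeight_mul_prod (hq : ‖q‖ < 1) (b : ι → ℂ) {z : ℂ} (hz : ∀ j, 1 - a j * z ≠ 0) :
    mgWeight q a b (q * z) * ∏ j, (1 - (b j)⁻¹ * (q * z)) =
      mgWeight q a b z * ∏ j, (1 - a j * z) := by
  have hprod : ∏ j, (1 - a j * z) ≠ 0 := prod_ne_zero_iff.2 fun j _ => hz j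
  rw [mgWeight_eq_ratio_mul hq a b z, mul_right_comm, prod_div_distrib, div_mul_cancel₀ _ hprod,
    mul_comm]
  simp only [mul_assoc]

lemma summable_jacksonMomentTerm_mgWeight {b : ι → ℂ} {k : ℕ} (hq0 : q ≠ 0) (hq : ‖q‖ < 1)
    (ha : ∀ j, a j ≠ 0) (hy : y ≠ 0)
    (hlow : ‖(∏ j, a j)⁻¹ * (∏ j, b j)⁻¹‖ < ‖s‖) (hupp : ‖s‖ < 1) (hk : k ≤ Fintype.card ι) :
    Summable (jacksonMomentTerm q s (mgWeight q a b) y k) := by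
  have hs : s ≠ 0 := norm_pos_iff.1 ((norm_nonneg _).trans_lt hlow)
  let ratio (z : ℂ) := ∏ j, (1 - (b j)⁻¹ * q * z) / (1 - a j * z)
  have hzero : Tendsto ratio (𝓝 0) (𝓝 1) := by
    have hlin (c : ℂ) : Tendsto (fun z => 1 - c * z) (𝓝 0) (𝓝 1) := by
      simpa using (show Continuous fun z => 1 - c * z by fun_prop).tendsto 0
    simpa [ratio] using tendsto_finsetProd univ fun j _ =>
      (hlin ((b j)⁻¹ * q)).div (hlin (a j)) one_ne_zero
  have hinfty : Tendsto ratio (cobounded ℂ) (𝓝 (∏ j, (b j)⁻¹ * q / a j)) :=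
    tendsto_finsetProd univ fun j _ => tendsto_one_sub_div_one_sub_cobounded (ha j) _
  have hqpow (m : ℕ) : ‖q ^ m‖ ≤ 1 := by
    rw [norm_pow]
    exact pow_le_one₀ (norm_nonneg q) hq.le
  refine summable_jacksonMomentTerm hq0 hq hs hy (hzero.inv₀ one_ne_zero) ?_ hinfty
    (.of_forall (mgWeight_eq_ratio_mul hq a b)) ?_ ?_
  · filter_upwards [hzero.eventually_ne one_ne_zero] with z hz
    rw [mgWeight_eq_ratio_mul hq a b z, inv_mul_cancel_left₀ hz]
  · rw [inv_one, mul_one, norm_mul]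
    exact mul_lt_one_of_nonneg_of_lt_one_left (norm_nonneg s) hupp (hqpow k)
  · have hlim : (s * q ^ k)⁻¹ * ∏ j, (b j)⁻¹ * q / a j =
        s⁻¹ * ((∏ j, a j)⁻¹ * (∏ j, b j)⁻¹) * q ^ (Fintype.card ι - k) := by
      rw [prod_div_distrib, prod_mul_distrib, prod_inv_distrib, prod_const, card_univ,
        pow_sub₀ _ hq0 hk]
      ring
    rw [hlim, norm_mul]
    refine mul_lt_one_of_nonneg_of_lt_one_left (norm_nonneg _) ?_ (hqpow _)
    rw [norm_mul, norm_inv]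
    exact (inv_mul_lt_one₀ (norm_pos_iff.2 hs)).2 hlow

end Weight

/-! ### The multiple sum as a determinant of moments -/

section MultipleSum

variable {n : ℕ} {q s : ℂ} {a b y : Fin n → ℂ}

lemma mgDualTerm_eq_det (hs : s ≠ 0) (q : ℂ) (a b y : Fin n → ℂ) (ν : Fin n → ℤ) :
    mgDualTerm q s a b y ν = (of fun i k : Fin n =>
      jacksonMomentTerm q s (mgWeight q a b) (y i) k.rev (ν i)).det := by
  have hdiff := det_projVandermonde 1 fun i => y i * q ^ ν i
  simp only [Pi.one_apply, one_mul] at hdiff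
  rw [mgDualTerm, ← hdiff, zpow_sum₀ hs, ← prod_mul_distrib, ← det_mul_column]
  simp [projVandermonde_apply, jacksonMomentTerm, mgWeight]

lemma mgDualSum_eq_det (hs : s ≠ 0)
    (hsum : ∀ i, ∀ k < n, Summable (jacksonMomentTerm q s (mgWeight q a b) (y i) k)) :
    mgDualSum q s a b y = (1 - q) ^ n *
      (of fun i k : Fin n => jacksonMoment q s (mgWeight q a b) (y i) k.rev).det := by
  simp only [mgDualSum, mgDualTerm_eq_det hs]
  rw [(hasSum_det_of_summable_norm fun i k : Fin n => (hsum i k.rev k.rev.isLt).norm).tsum_eq]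
  rfl

lemma prod_mul_mgDualSum_mul_eq_det (hq : q ≠ 0) (hs : s ≠ 0) (hy : ∀ i, y i ≠ 0)
    (hsum : ∀ i, ∀ k ≤ n, Summable (jacksonMomentTerm q s (mgWeight q a b) (y i) k)) :
    (∏ i, y i) * mgDualSum q (q * s) a b y = (1 - q) ^ n *
      (of fun i k : Fin n => jacksonMoment q s (mgWeight q a b) (y i) (k.rev + 1)).det := by
  have hsum' (i : Fin n) (k : ℕ) (hk : k < n) :
      Summable (jacksonMomentTerm q (q * s) (mgWeight q a b) (y i) k) := by
    rw [← summable_mul_left_iff (hy i)]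
    simpa only [mul_jacksonMomentTerm] using hsum i (k + 1) hk
  rw [mgDualSum_eq_det (mul_ne_zero hq hs) hsum', mul_left_comm, ← det_mul_column]
  simp only [of_apply, mul_jacksonMoment]

lemma one_sub_mul_det_jacksonMoment_mgWeight (hq0 : q ≠ 0) (hq : ‖q‖ < 1) (hs : s ≠ 0)
    (hpole : ∀ i j, ∀ ν : ℤ, 1 - a j * (y i * q ^ ν) ≠ 0)
    (hsum : ∀ i, ∀ k ≤ n, Summable (jacksonMomentTerm q s (mgWeight q a b) (y i) k)) :
    (1 - s) * (of fun i k : Fin n => jacksonMoment q s (mgWeight q a b) (y i) k.rev).det =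
      ((∏ j, b j)⁻¹ - s * ∏ j, a j) *
        (of fun i k : Fin n => jacksonMoment q s (mgWeight q a b) (y i) (k.rev + 1)).det := by
  let c := C s * prodOneSub a - prodOneSub fun j => (b j)⁻¹
  have hrel (i : Fin n) :
      ∑ k ∈ range (n + 1), c.coeff k * jacksonMoment q s (mgWeight q a b) (y i) k = 0 := by
    refine sum_coeff_mul_jacksonMoment_eq_zero hq0 hs ?_ ?_ (fun ν => ?_) (hsum i)
    · simpa using natDegree_prodOneSub_le a
    · simpa using natDegree_prodOneSub_le fun j => (b j)⁻¹
    · simpa only [eval_prodOneSub] using mgWeight_mul_prod hq b fun j => hpole i j ν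
  have hfirst : c.coeff 0 = s - 1 := by simp [c, coeff_zero_prodOneSub]
  have hlast : c.coeff n = (-1) ^ n * (s * ∏ j, a j - (∏ j, b j)⁻¹) := by
    have htop (d : Fin n → ℂ) : (prodOneSub d).coeff n = (-1) ^ n * ∏ j, d j := by
      simpa using coeff_card_prodOneSub d
    simp only [c, coeff_sub, coeff_C_mul, htop, prod_inv_distrib]
    ring
  have hdet := coeff_zero_mul_det_eq_coeff_mul_det hrel
  rw [hfirst, hlast, ← mul_assoc ((-1) ^ n), ← mul_pow, neg_one_mul, neg_neg, one_pow,
    one_mul] at hdet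
  linear_combination -hdet

end MultipleSum

theorem milne_gustafson_dual_recurrence_general {q s : ℂ} (hq0 : q ≠ 0) (hq : ‖q‖ < 1) {n : ℕ}
    {a b y : Fin n → ℂ} (ha : ∀ i, a i ≠ 0) (hb : ∀ i, b i ≠ 0) (hy : ∀ i, y i ≠ 0)
    (hlow : ‖(∏ i, a i)⁻¹ * (∏ i, b i)⁻¹‖ < ‖s‖) (hupp : ‖s‖ < 1)
    (hya : ∀ i j, ∀ m : ℤ, y i * a j ≠ q ^ m) :
    mgDualSum q s a b y =
      (1 - s * (∏ i, a i) * ∏ i, b i) / ((∏ i, b i) * (1 - s)) *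
        (∏ i, y i) * mgDualSum q (q * s) a b y := by
  have hs : s ≠ 0 := norm_pos_iff.1 ((norm_nonneg _).trans_lt hlow)
  have hs1 : 1 - s ≠ 0 := sub_ne_zero.2 fun h => by simp [← h] at hupp
  have hB : ∏ i, b i ≠ 0 := prod_ne_zero_iff.2 fun i _ => hb i
  have hpole (i j : Fin n) (ν : ℤ) : 1 - a j * (y i * q ^ ν) ≠ 0 := fun h =>
    hya i j (-ν) <| by
      rw [_root_.zpow_neg]
      exact eq_inv_of_mul_eq_one_left (by linear_combination -h)
  have hsum (i : Fin n) (k : ℕ) (hk : k ≤ n) :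
      Summable (jacksonMomentTerm q s (mgWeight q a b) (y i) k) :=
    summable_jacksonMomentTerm_mgWeight hq0 hq ha (hy i) hlow hupp (by simpa using hk)
  have hdet := one_sub_mul_det_jacksonMoment_mgWeight hq0 hq hs hpole hsum
  rw [mul_assoc, prod_mul_mgDualSum_mul_eq_det hq0 hs hy hsum,
    mgDualSum_eq_det hs fun i k hk => hsum i k hk.le]
  field_simp at hdet ⊢
  linear_combination (1 - q) ^ n * hdet

/-- Recurrence for the dual Milne–Gustafson sum. -/
theorem milne_gustafson_dual_recurrence
    (q : ℝ) (hq0 : 0 < q) (hq1 : q < 1) (n : ℕ) (hn : 1 ≤ n)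
    (a b : Fin n → ℂ) (ha : ∀ i, a i ≠ 0) (hb : ∀ i, b i ≠ 0)
    (s : ℂ) (hs0 : s ≠ 0)
    (y : Fin n → ℂ) (hy : ∀ i, y i ≠ 0)
    (hlow : ‖(∏ i, a i)⁻¹ * (∏ i, b i)⁻¹‖ < ‖s‖) (hupp : ‖s‖ < 1)
    (hya : ∀ i j, ∀ m : ℤ, y i * a j ≠ (q : ℂ) ^ m) :
    mgDualSum (q : ℂ) s a b y =
      (1 - s * (∏ i, a i) * ∏ i, b i) / ((∏ i, b i) * (1 - s)) *
        (∏ i, y i) * mgDualSum (q : ℂ) ((q : ℂ) * s) a b y := by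
  exact milne_gustafson_dual_recurrence_general (by exact_mod_cast hq0.ne')
    (by rwa [Complex.norm_real, Real.norm_of_nonneg hq0.le]) ha hb hy hlow hupp hya
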